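/- Let a, b, c ≥ 0 and let P be a polynomial extension of Φ_{a,b,c}. Then for all complex numbers α, β, γ, P(α,…,α; β,…,β; γ,…,γ) = N_{a,b,c} · (α − β)^{ab} · (γ − β)^{bc} · (α − γ)^{ca}, where N_{a,b,c} is the number of semistandard Young tableaux of rectangular shape b × c with entries in {1,…,a+b} (equivalently, the number of plane partitions in an a × b × c box). -/

import Mathlib

/-- Eq. (2.6) of the paper: the explicit formula for the component of the O(1) loop model
ground state corresponding to three series of nested arches of sizes `a`, `b`, `c`. -/
noncomputable def Phi (a b c : ℕ) (α : Fin (b + c) → ℂ) (β : Fin (a + c) → ℂ)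
    (γ : Fin (a + b) → ℂ) : ℂ :=
  ∑ I ∈ Finset.powersetCard c (Finset.univ : Finset (Fin (b + c))),
    ((∏ i ∈ Iᶜ, ∏ j, (α i - β j)) * ∏ i ∈ I, ∏ k, (α i - γ k)) /
      ∏ i ∈ I, ∏ j ∈ Iᶜ, (α i - α j)

/-- A function `P : ℂ^{b+c} × ℂ^{a+c} × ℂ^{a+b} → ℂ` is a polynomial function if it is
given by the evaluation of a multivariate polynomial in all of the variables. -/
def IsPolyFun (a b c : ℕ)
    (P : (Fin (b + c) → ℂ) → (Fin (a + c) → ℂ) → (Fin (a + b) → ℂ) → ℂ) : Prop :=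
  ∃ p : MvPolynomial (Fin (b + c) ⊕ Fin (a + c) ⊕ Fin (a + b)) ℂ,
    ∀ α β γ, P α β γ = MvPolynomial.eval (Sum.elim α (Sum.elim β γ)) p

/-- Semistandard Young tableaux of rectangular shape `b × c` with entries in `{1, …, a+b}`:
rows weakly increasing, columns strictly increasing. -/
def IsRectSSYT (a b c : ℕ) (T : Fin b → Fin c → Fin (a + b)) : Prop :=
  (∀ (i : Fin b) (j j' : Fin c), j ≤ j' → T i j ≤ T i j') ∧
    (∀ (i i' : Fin b) (j : Fin c), i < i' → T i j < T i' j)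

instance (a b c : ℕ) : DecidablePred (IsRectSSYT a b c) := fun _ => by
  unfold IsRectSSYT; infer_instance

/-- `N_{a,b,c}`: the number of semistandard Young tableaux of rectangular shape `b × c`
with entries in `{1, …, a+b}`, equivalently the number of plane partitions in an
`a × b × c` box. -/
def NSSYT (a b c : ℕ) : ℕ :=
  (Finset.univ.filter (fun T : Fin b → Fin c → Fin (a + b) => IsRectSSYT a b c T)).card

/-!
Fix the `β`s and the `γ`s at constants and let the `α`s tend to a common value along injective
families. A Möbius transformation applied to the `α`s turns `Phi` into an explicit factor
times the symmetric sum `∑ I, ∏ i ∈ I, (1 + t i) ^ (a + b) / ∏ i ∈ I, ∏ j ∉ I, (t i - t j)`, with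
`t` tending to `0`. By the Cauchy–Binet formula this sum is a `c × c` determinant of divided
differences of `t ^ m * (1 + t) ^ (a + b)`. Divided differences extend polynomially to coinciding
points, so the limit is a determinant of binomial coefficients, namely the dual Jacobi–Trudi
determinant of the `b × c` rectangle at `a + b` variables equal to `1`. Pascal's rule, applied to
all rows at once, gives it the recursion that counts tableaux by deleting the largest entry.
-/

open Finset Polynomial
open scoped Matrix

section DualJacobiTrudi

/-- The binomial coefficient with an integer lower index, which is `0` when that index is
negative. -/
def intChoose (n : ℕ) (z : ℤ) : ℤ := if 0 ≤ z then (n.choose z.toNat : ℤ) else 0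

theorem intChoose_of_neg (n : ℕ) {z : ℤ} (hz : z < 0) : intChoose n z = 0 := by
  simp [intChoose, hz]

theorem intChoose_zero_left (z : ℤ) : intChoose 0 z = if z = 0 then 1 else 0 := by
  rcases lt_trichotomy z 0 with hz | rfl | hz
  · rw [intChoose_of_neg _ hz, if_neg hz.ne]
  · simp [intChoose]
  · rw [intChoose, if_pos hz.le, if_neg hz.ne', Nat.choose_eq_zero_of_lt (by omega), Nat.cast_zero]

theorem intChoose_succ_left (n : ℕ) (z : ℤ) :
    intChoose (n + 1) z = intChoose n (z - 1) + intChoose n z := by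
  rcases lt_trichotomy z 0 with hz | rfl | hz
  · simp only [intChoose_of_neg _ hz, intChoose_of_neg n (show z - 1 < 0 by omega), add_zero]
  · simp [intChoose]
  · obtain ⟨m, rfl⟩ : ∃ m : ℕ, z = m + 1 := ⟨(z - 1).toNat, by omega⟩
    have hm : ((m : ℤ) + 1).toNat = m + 1 := by omega
    simp only [intChoose, hm, if_pos hz.le, add_sub_cancel_right, Int.toNat_natCast,
      Nat.choose_succ_succ, Nat.cast_nonneg, if_true, Nat.cast_add]

variable {c : ℕ} {h : Fin c → ℤ}

/-- The dual Jacobi–Trudi determinant `det (e_{h_j - j + k})` of the shape with column heights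
`h`, with each elementary symmetric polynomial `e_m` replaced by its value `n.choose m` at `n`
variables equal to `1`. -/
def dualJacobiTrudiDet (n : ℕ) (h : Fin c → ℤ) : ℤ :=
  (Matrix.of fun j k : Fin c => intChoose n (h j - j + k)).det

/-- The column heights `h` with those of the columns in `F` decreased by one. -/
def lowerColumns (h : Fin c → ℤ) (F : Finset (Fin c)) (j : Fin c) : ℤ :=
  h j - if j ∈ F then 1 else 0

/-- Multilinearity in the rows, after Pascal's rule in every entry. -/
theorem dualJacobiTrudiDet_succ (n : ℕ) (h : Fin c → ℤ) :
    dualJacobiTrudiDet (n + 1) h = ∑ F, dualJacobiTrudiDet n (lowerColumns h F) := by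
  let Δ := (Matrix.detRowAlternating (n := Fin c) (R := ℤ)).toMultilinearMap
  have hpascal : dualJacobiTrudiDet (n + 1) h =
      Δ ((fun j (k : Fin c) => intChoose n (h j - 1 - j + k)) +
        fun j (k : Fin c) => intChoose n (h j - j + k)) := by
    refine congrArg Matrix.det ?_
    ext j k
    rw [Matrix.of_apply, intChoose_succ_left, show h j - j + k - 1 = h j - 1 - j + k by ring]
    rfl
  rw [hpascal, Δ.map_add_univ]
  refine sum_congr rfl fun F _ => congrArg Matrix.det ?_
  ext j k
  by_cases hj : j ∈ F <;> simp [lowerColumns, hj]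

theorem dualJacobiTrudiDet_eq_zero_of_neg (n : ℕ) (hanti : Antitone h) {j : Fin c}
    (hj : h j < 0) : dualJacobiTrudiDet n h = 0 := by
  cases c with
  | zero => exact j.elim0
  | succ c =>
    refine Matrix.det_eq_zero_of_row_eq_zero (Fin.last c) fun k => intChoose_of_neg n ?_
    have := hanti j.le_last
    have := k.is_lt
    rw [Fin.val_last]
    omega

/-- Two adjacent rows coincide. -/
theorem dualJacobiTrudiDet_lowerColumns_eq_zero (n : ℕ) (hanti : Antitone h)
    {F : Finset (Fin c)} (hF : ¬ Antitone (lowerColumns h F)) :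
    dualJacobiTrudiDet n (lowerColumns h F) = 0 := by
  cases c with
  | zero => exact absurd (Subsingleton.antitone _) hF
  | succ c =>
    rw [Fin.antitone_iff_succ_le] at hF
    push Not at hF
    obtain ⟨j, hj⟩ := hF
    have hle := hanti j.castSucc_lt_succ.le
    have heq : lowerColumns h F j.succ = lowerColumns h F j.castSucc + 1 := by
      revert hj
      simp only [lowerColumns]
      split_ifs <;> omega
    refine Matrix.det_zero_of_row_eq j.castSucc_lt_succ.ne ?_
    ext k
    simp only [Matrix.of_apply, heq, Fin.val_succ, Fin.val_castSucc, Nat.cast_add, Nat.cast_one,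
      add_sub_add_right_eq_sub]

theorem dualJacobiTrudiDet_zero_left (hanti : Antitone h) (hnonneg : 0 ≤ h) :
    dualJacobiTrudiDet 0 h = if h = 0 then 1 else 0 := by
  split_ifs with h0
  · subst h0
    rw [dualJacobiTrudiDet, ← Matrix.det_one (n := Fin c)]
    congr 1
    ext j k
    simp only [Matrix.of_apply, intChoose_zero_left, Matrix.one_apply, Pi.zero_apply]
    refine if_congr ?_ rfl rfl
    rw [Fin.ext_iff]
    omega
  · cases c with
    | zero => exact absurd (Subsingleton.elim _ _) h0
    | succ c =>
      have hpos : 0 < h 0 := by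
        by_contra hneg
        exact h0 (le_antisymm (fun j => (hanti j.zero_le).trans (not_lt.1 hneg)) hnonneg)
      refine Matrix.det_eq_zero_of_row_eq_zero 0 fun k => ?_
      rw [Matrix.of_apply, intChoose_zero_left, if_neg]
      simp only [Fin.val_zero]
      omega

end DualJacobiTrudi

section LatticeWords

variable {c n : ℕ} {h : Fin c → ℤ} {E : Fin n → Finset (Fin c)}

/-- The number of occurrences of the letter `j` among the first `k` entries of a word `E` of sets
of letters. -/
def wordContent (E : Fin n → Finset (Fin c)) (k : ℕ) (j : Fin c) : ℕ :=
  #{l : Fin n | (l : ℕ) < k ∧ j ∈ E l}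

open Classical in
/-- The lattice words of length `n` and content `h`: the words of sets of letters whose initial
segments all have antitone content. Reading `E l` as the set of columns containing the entry `l`,
they encode the semistandard tableaux with column heights `h`. -/
noncomputable def latticeWords (n : ℕ) (h : Fin c → ℤ) : Finset (Fin n → Finset (Fin c)) :=
  {E | (∀ k, Antitone (wordContent E k)) ∧ ∀ j, (wordContent E n j : ℤ) = h j}

theorem mem_latticeWords :
    E ∈ latticeWords n h ↔
      (∀ k, Antitone (wordContent E k)) ∧ ∀ j, (wordContent E n j : ℤ) = h j := by
  simp [latticeWords]

theorem antitone_of_mem_latticeWords (hE : E ∈ latticeWords n h) : Antitone h := fun i j hij => by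
  rw [mem_latticeWords] at hE
  rw [← hE.2, ← hE.2]
  exact_mod_cast hE.1 n hij

theorem nonneg_of_mem_latticeWords (hE : E ∈ latticeWords n h) : 0 ≤ h := fun j => by
  rw [← (mem_latticeWords.1 hE).2 j]
  exact Int.natCast_nonneg _

theorem wordContent_of_le (E : Fin n → Finset (Fin c)) {k : ℕ} (hk : n ≤ k) :
    wordContent E k = wordContent E n := by
  ext j
  simp only [wordContent, Fin.is_lt, true_and, fun l : Fin n => l.is_lt.trans_le hk]

theorem wordContent_snoc (E : Fin n → Finset (Fin c)) (F : Finset (Fin c)) (k : ℕ) (j : Fin c) :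
    wordContent (Fin.snoc E F : Fin (n + 1) → _) k j =
      wordContent E k j + if n < k ∧ j ∈ F then 1 else 0 := by
  simp only [wordContent, card_filter, Fin.sum_univ_castSucc, Fin.snoc_castSucc, Fin.snoc_last,
    Fin.val_castSucc, Fin.val_last]

theorem snoc_mem_latticeWords_iff (hanti : Antitone h) {F : Finset (Fin c)} :
    (Fin.snoc E F : Fin (n + 1) → _) ∈ latticeWords (n + 1) h ↔
      E ∈ latticeWords n (lowerColumns h F) := by
  have hinit : ∀ k ≤ n, wordContent (Fin.snoc E F : Fin (n + 1) → _) k = wordContent E k := by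
    intro k hk
    ext j
    simp [wordContent_snoc, hk.not_gt]
  have htotal : (∀ j, (wordContent (Fin.snoc E F : Fin (n + 1) → _) (n + 1) j : ℤ) = h j) ↔
      ∀ j, (wordContent E n j : ℤ) = lowerColumns h F j := by
    refine forall_congr' fun j => ?_
    simp [wordContent_snoc, wordContent_of_le E n.le_succ, lowerColumns, eq_sub_iff_add_eq]
  rw [mem_latticeWords, mem_latticeWords, htotal]
  refine and_congr_left fun hlower => ⟨fun hsnoc k => ?_, fun hE k => ?_⟩
  · rcases le_total k n with hk | hk
    · exact hinit k hk ▸ hsnoc k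
    · rw [wordContent_of_le E hk, ← hinit n le_rfl]
      exact hsnoc n
  · rcases Nat.lt_or_ge n k with hk | hk
    · rw [wordContent_of_le _ hk]
      intro i j hij
      have := hanti hij
      rw [← htotal.2 hlower, ← htotal.2 hlower] at this
      exact_mod_cast this
    · exact hinit k hk ▸ hE k

theorem card_latticeWords_succ (hanti : Antitone h) :
    #(latticeWords (n + 1) h) = ∑ F, #(latticeWords n (lowerColumns h F)) := by
  rw [← card_sigma]
  refine card_nbij' (fun E => ⟨E (Fin.last n), Fin.init E⟩) (fun p => Fin.snoc p.2 p.1)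
    (fun E hE => ?_) (fun p hp => ?_) (fun E _ => by simp) (fun p _ => by simp)
  · simpa [← snoc_mem_latticeWords_iff hanti] using hE
  · simpa [snoc_mem_latticeWords_iff hanti] using hp

theorem card_latticeWords (n : ℕ) (hanti : Antitone h) (hnonneg : 0 ≤ h) :
    (#(latticeWords n h) : ℤ) = dualJacobiTrudiDet n h := by
  induction n generalizing h with
  | zero =>
    rw [dualJacobiTrudiDet_zero_left hanti hnonneg]
    have hmem : ∀ E, E ∈ latticeWords 0 h ↔ h = 0 := fun E => by
      have hzero : ∀ k, wordContent E k = 0 := fun k => by ext; simp [wordContent]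
      simp [mem_latticeWords, hzero, funext_iff, eq_comm, antitone_const, Pi.zero_def]
    split_ifs with h0
    · rw [eq_univ_iff_forall.2 fun E => (hmem E).2 h0]
      simp
    · rw [eq_empty_of_forall_notMem fun E => mt (hmem E).1 h0]
      simp
  | succ n ih =>
    rw [card_latticeWords_succ hanti, dualJacobiTrudiDet_succ, Nat.cast_sum]
    refine sum_congr rfl fun F _ => ?_
    by_cases hF : Antitone (lowerColumns h F)
    · by_cases hneg : 0 ≤ lowerColumns h F
      · exact ih hF hneg
      · obtain ⟨j, hj⟩ : ∃ j, lowerColumns h F j < 0 := by simpa [Pi.le_def] using hneg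
        rw [dualJacobiTrudiDet_eq_zero_of_neg n hF hj,
          eq_empty_of_forall_notMem fun E hE => hneg (nonneg_of_mem_latticeWords hE)]
        simp
    · rw [dualJacobiTrudiDet_lowerColumns_eq_zero n hanti hF,
        eq_empty_of_forall_notMem fun E hE => hF (antitone_of_mem_latticeWords hE)]
      simp

end LatticeWords

section Tableaux

theorem monotone_le_iff_forall_card_filter_lt_le {b : ℕ} {α : Type*} [LinearOrder α]
    {f g : Fin b → α} (hf : Monotone f) (hg : Monotone g) :
    f ≤ g ↔ ∀ a, #{i | g i < a} ≤ #{i | f i < a} := by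
  refine ⟨fun hfg a => card_le_card fun i => ?_, fun hcard => not_exists_not.1 ?_⟩
  · simpa using (hfg i).trans_lt
  · rintro ⟨i, hi⟩
    have hle : #(Iic i) ≤ #{j | g j < f i} := card_le_card fun j hj => by
      simpa using (hg (mem_Iic.1 hj)).trans_lt (not_le.1 hi)
    have hlt : #{j | f j < f i} ≤ #(Iio i) := card_le_card fun j hj => by
      simpa using hf.reflect_lt (mem_filter.1 hj).2
    have := hle.trans ((hcard (f i)).trans hlt)
    simp at this

variable {b c n : ℕ}

/-- The word of a filling `T`, whose `l`-th entry is the set of columns of `T` containing `l`. -/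
def columnWord (T : Fin b → Fin c → Fin n) (l : Fin n) : Finset (Fin c) := {j | ∃ i, T i j = l}

theorem wordContent_columnWord {T : Fin b → Fin c → Fin n} {j : Fin c}
    (hT : StrictMono fun i => T i j) (k : ℕ) :
    wordContent (columnWord T) k j = #{i | (T i j : ℕ) < k} := by
  rw [wordContent, ← card_image_of_injective {i | (T i j : ℕ) < k} hT.injective]
  refine congrArg card ?_
  ext l
  simp only [columnWord, mem_filter, mem_univ, true_and, mem_image]
  exact ⟨fun ⟨hl, i, hi⟩ => ⟨i, hi ▸ hl, hi⟩, fun ⟨i, hl, hi⟩ => ⟨hi ▸ hl, i, hi⟩⟩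

theorem columnWord_injOn :
    Set.InjOn columnWord {T : Fin b → Fin c → Fin n | ∀ j, StrictMono fun i => T i j} := by
  intro T hT T' hT' hword
  ext i j : 2
  refine congrFun ((hT j).range_inj (hT' j) |>.1 ?_) i
  ext l
  simpa [columnWord] using Finset.ext_iff.1 (congrFun hword l) j

theorem exists_columnWord_eq {E : Fin n → Finset (Fin c)} (hE : ∀ j, wordContent E n j = b) :
    ∃ T : Fin b → Fin c → Fin n, (∀ j, StrictMono fun i => T i j) ∧ columnWord T = E := by
  have hcard : ∀ j, #{l | j ∈ E l} = b := fun j => by simpa [wordContent] using hE j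
  refine ⟨fun i j => orderEmbOfFin _ (hcard j) i, fun j => OrderEmbedding.strictMono _, ?_⟩
  ext l j
  have hrange := Set.ext_iff.1 (range_orderEmbOfFin _ (hcard j)) l
  simpa only [columnWord, mem_filter, mem_univ, true_and, Set.mem_range, mem_coe] using hrange

theorem columnWord_mem_latticeWords_iff {T : Fin b → Fin c → Fin n}
    (hT : ∀ j, StrictMono fun i => T i j) :
    columnWord T ∈ latticeWords n (fun _ => (b : ℤ)) ↔ ∀ i, Monotone (T i) := by
  have hrows : (∀ k, Antitone (wordContent (columnWord T) k)) ↔ ∀ i, Monotone (T i) := by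
    have hcols : ∀ j, Monotone fun i => (T i j : ℕ) := fun j => (hT j).monotone
    have hpair : ∀ j j', (∀ k, wordContent (columnWord T) k j' ≤ wordContent (columnWord T) k j) ↔
        ∀ i, T i j ≤ T i j' := fun j j' => by
      simp only [wordContent_columnWord (hT _)]
      exact (monotone_le_iff_forall_card_filter_lt_le (hcols j) (hcols j')).symm
    exact ⟨fun hanti i j j' hj => (hpair j j').1 (fun k => hanti k hj) i,
      fun hmono k j j' hj => (hpair j j').2 (fun i => hmono i hj) k⟩
  simp [mem_latticeWords, hrows, wordContent_columnWord (hT _)]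

theorem NSSYT_eq_dualJacobiTrudiDet (a b c : ℕ) :
    (NSSYT a b c : ℤ) = dualJacobiTrudiDet (a + b) fun _ : Fin c => (b : ℤ) := by
  rw [← card_latticeWords _ antitone_const fun _ => Int.natCast_nonneg b, NSSYT, Nat.cast_inj]
  refine card_nbij columnWord (fun T hT => ?_) (columnWord_injOn.mono fun T hT => ?_) fun E hE => ?_
  · obtain ⟨hrow, hcol⟩ := (mem_filter.1 hT).2
    exact (columnWord_mem_latticeWords_iff fun j i i' => hcol i i' j).2 hrow
  · exact fun j i i' => (mem_filter.1 hT).2.2 i i' j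
  · obtain ⟨T, hT, rfl⟩ := exists_columnWord_eq (b := b) fun j => by
      exact_mod_cast (mem_latticeWords.1 hE).2 j
    refine ⟨T, mem_filter.2 ⟨mem_univ T, ?_, fun i i' j => @hT j i i'⟩, rfl⟩
    exact (columnWord_mem_latticeWords_iff hT).1 hE

end Tableaux

section CauchyBinet

variable {m n R : Type*} [Fintype m] [DecidableEq m] [CommRing R]

theorem det_of_sum_mul (s : Finset n) (A : Matrix m n R) (B : Matrix n m R) :
    (Matrix.of fun k l => ∑ i ∈ s, A k i * B i l).det =
      ∑ f ∈ Fintype.piFinset fun _ : m => s, (∏ l, B (f l) l) * (A.submatrix id f).det := by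
  have hcols : (Matrix.of fun k l => ∑ i ∈ s, A k i * B i l)ᵀ =
      fun l => ∑ i ∈ s, B i l • Aᵀ i := by
    ext l k
    simp [Finset.sum_apply, mul_comm]
  rw [← Matrix.det_transpose, hcols]
  let Δ := (Matrix.detRowAlternating (n := m) (R := R)).toMultilinearMap
  refine (Δ.map_sum_finset (fun l i => B i l • Aᵀ i) fun _ => s).trans
    (sum_congr rfl fun f _ => ?_)
  rw [Δ.map_smul_univ, smul_eq_mul, ← Matrix.det_transpose (A.submatrix id f)]
  rfl

/-- The Cauchy–Binet formula. Each summand is `det A_I * det B_I`; writing it as the determinant of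
the restricted product avoids choosing an order on `n`. -/
theorem det_mul_eq_sum_powersetCard [Fintype n] (A : Matrix m n R) (B : Matrix n m R) :
    (A * B).det = ∑ I ∈ powersetCard (Fintype.card m) (univ : Finset n),
      (Matrix.of fun k l => ∑ i ∈ I, A k i * B i l).det := by
  classical
  have hnotinj : ∀ f : m → n, ¬ Function.Injective f → (A.submatrix id f).det = 0 := by
    intro f hf
    obtain ⟨k, l, hkl, hne⟩ := Function.not_injective_iff.1 hf
    exact Matrix.det_zero_of_column_eq hne fun i => by simp [hkl]
  have himage : ∀ I ∈ powersetCard (Fintype.card m) (univ : Finset n), ∀ f : m → n,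
      Function.Injective f → (univ.image f = I ↔ f ∈ Fintype.piFinset fun _ => I) := by
    intro I hI f hf
    rw [Fintype.mem_piFinset]
    refine ⟨by rintro rfl; simp, fun hfI => eq_of_subset_of_card_le ?_ ?_⟩
    · exact image_subset_iff.2 fun k _ => hfI k
    · rw [card_image_of_injective _ hf, (mem_powersetCard.1 hI).2, card_univ]
  calc (A * B).det
      = ∑ f : m → n, (∏ l, B (f l) l) * (A.submatrix id f).det := by
        rw [← Fintype.piFinset_univ]
        exact det_of_sum_mul univ A B
    _ = ∑ f : m → n with Function.Injective f, (∏ l, B (f l) l) * (A.submatrix id f).det := by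
        refine (sum_filter_of_ne fun f _ hne => ?_).symm
        exact not_imp_comm.1 (hnotinj f) (right_ne_zero_of_mul hne)
    _ = ∑ I ∈ powersetCard (Fintype.card m) univ,
          ∑ f ∈ {f : m → n | Function.Injective f} with univ.image f = I,
            (∏ l, B (f l) l) * (A.submatrix id f).det := by
        refine (sum_fiberwise_of_maps_to (fun f hf => ?_) _).symm
        exact mem_powersetCard.2 ⟨subset_univ _, card_image_of_injective _ (mem_filter.1 hf).2⟩
    _ = _ := by
        refine sum_congr rfl fun I hI => ?_
        rw [det_of_sum_mul]
        refine sum_subset_zero_on_sdiff (fun f hf => ?_) (fun f hf => ?_) fun _ _ => rfl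
        · simp only [mem_filter, mem_univ, true_and] at hf
          exact (himage I hI f hf.1).1 hf.2
        · rw [hnotinj f, mul_zero]
          simp only [mem_sdiff, mem_filter, mem_univ, true_and, not_and] at hf
          exact fun hinj => hf.2 hinj ((himage I hI f hinj).2 hf.1)

end CauchyBinet

section Discriminant

variable {R : Type*} [CommRing R]

theorem det_vandermonde_mul_det_projVandermonde_one {c : ℕ} (v : Fin c → R) :
    (Matrix.vandermonde v).det * (Matrix.projVandermonde 1 v).det =
      ∏ i, ∏ j ∈ univ.erase i, (v i - v j) := by
  rw [mul_comm, Matrix.det_vandermonde, Matrix.det_projVandermonde]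
  simp only [Pi.one_apply, one_mul, ← prod_mul_distrib]
  rw [prod_prod_Ioi_mul_eq_prod_prod_off_diag fun j i => v i - v j]
  simp only [compl_singleton]

theorem det_of_sum_mul_pow_mul_pow_rev {ι : Type*} [DecidableEq ι] {c : ℕ} (x φ : ι → R)
    {I : Finset ι} (hI : #I = c) :
    (Matrix.of fun k l : Fin c => ∑ i ∈ I, x i ^ (k : ℕ) * (φ i * x i ^ (l.rev : ℕ))).det =
      (∏ i ∈ I, φ i) * ∏ i ∈ I, ∏ j ∈ I.erase i, (x i - x j) := by
  obtain ⟨e, rfl⟩ : ∃ e : Fin c ↪ ι, univ.map e = I :=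
    ⟨(I.equivFinOfCardEq hI).symm.toEmbedding.trans (.subtype _), by
      rw [← map_map, map_univ_equiv, univ_eq_attach, attach_map_val]⟩
  have hfactor : (Matrix.of fun k l : Fin c =>
      ∑ i ∈ univ.map e, x i ^ (k : ℕ) * (φ i * x i ^ (l.rev : ℕ))) =
        (Matrix.vandermonde (x ∘ e))ᵀ *
          (Matrix.diagonal (φ ∘ e) * Matrix.projVandermonde 1 (x ∘ e)) := by
    ext k l
    rw [Matrix.mul_apply]
    simp [Matrix.diagonal_mul, Matrix.vandermonde_apply, Matrix.projVandermonde_apply]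
  rw [hfactor, Matrix.det_mul, Matrix.det_mul, Matrix.det_diagonal, Matrix.det_transpose,
    mul_left_comm, det_vandermonde_mul_det_projVandermonde_one]
  simp only [prod_map, ← map_erase, Function.comp_apply]

end Discriminant

section DividedDifference

/-- The divided difference of the polynomial `p` at the points `x`: the leading coefficient of the
interpolant of `p` of degree less than `card ι`. Taking the interpolant to be the remainder modulo
the nodal polynomial allows the points to coincide. For empty `ι` the index `card ι - 1` is
truncated and the value is `0` all the same. -/
noncomputable def dividedDifference {ι R : Type*} [Fintype ι] [CommRing R] (p : R[X])
    (x : ι → R) : R :=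
  (p %ₘ Lagrange.nodal univ x).coeff (Fintype.card ι - 1)

variable {ι : Type*} [Fintype ι]

theorem dividedDifference_eq_sum [DecidableEq ι] {K : Type*} [Field K] (p : K[X]) {x : ι → K}
    (hx : Function.Injective x) :
    dividedDifference p x = ∑ i, p.eval (x i) / ∏ j ∈ univ.erase i, (x i - x j) := by
  have hdeg : (p %ₘ Lagrange.nodal univ x).degree < #(univ : Finset ι) := by
    rw [← Lagrange.degree_nodal (v := x)]
    exact degree_modByMonic_lt _ Lagrange.nodal_monic
  rw [dividedDifference, ← card_univ, Lagrange.coeff_eq_sum hx.injOn hdeg]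
  refine sum_congr rfl fun i hi => ?_
  rw [eval, eval₂_modByMonic_eq_self_of_root (Lagrange.eval_nodal_at_node hi), eval]

theorem map_dividedDifference {R S : Type*} [CommRing R] [CommRing S] (φ : R →+* S) (p : R[X])
    (x : ι → R) : φ (dividedDifference p x) = dividedDifference (p.map φ) (φ ∘ x) := by
  rw [dividedDifference, ← coeff_map, map_modByMonic φ Lagrange.nodal_monic]
  simp [dividedDifference, Lagrange.nodal, Polynomial.map_prod]

theorem continuous_dividedDifference {R : Type*} [CommRing R] [TopologicalSpace R]
    [IsTopologicalRing R] (p : R[X]) :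
    Continuous fun x : ι → R => dividedDifference p x := by
  have hgeneric : (fun x : ι → R => dividedDifference p x) = fun x =>
      MvPolynomial.eval x (dividedDifference (p.map MvPolynomial.C) MvPolynomial.X) := by
    ext x
    rw [map_dividedDifference, Polynomial.map_map]
    have hC : (MvPolynomial.eval x).comp MvPolynomial.C = RingHom.id R := by ext; simp
    simp [hC, Function.comp_def]
  rw [hgeneric]
  exact MvPolynomial.continuous_eval _

theorem dividedDifference_zero [Nonempty ι] {R : Type*} [CommRing R] (p : R[X]) :
    dividedDifference p (0 : ι → R) = p.coeff (Fintype.card ι - 1) := by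
  have hnodal : Lagrange.nodal univ (0 : ι → R) = X ^ Fintype.card ι := by
    simp [Lagrange.nodal, card_univ]
  rw [dividedDifference, hnodal]
  conv_rhs => rw [← modByMonic_add_div p (X ^ Fintype.card ι)]
  rw [coeff_add, coeff_X_pow_mul', if_neg (by have := Fintype.card_pos (α := ι); omega), add_zero]

end DividedDifference

section HankelDeterminant

variable {ι K : Type*} [Fintype ι] [DecidableEq ι] [Field K] (c : ℕ) (g : K[X])

theorem sum_powersetCard_prod_eval_div_eq_det {x : ι → K} (hx : Function.Injective x) :
    ∑ I ∈ powersetCard c (univ : Finset ι),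
        (∏ i ∈ I, g.eval (x i)) / ∏ i ∈ I, ∏ j ∈ Iᶜ, (x i - x j) =
      (Matrix.of fun k l : Fin c => dividedDifference (X ^ (k + l.rev : ℕ) * g) x).det := by
  let φ : ι → K := fun i => g.eval (x i) / ∏ j ∈ univ.erase i, (x i - x j)
  have hprod : (Matrix.of fun k l : Fin c => dividedDifference (X ^ (k + l.rev : ℕ) * g) x) =
      (Matrix.of fun (k : Fin c) i => x i ^ (k : ℕ)) *
        (Matrix.of fun i (l : Fin c) => φ i * x i ^ (l.rev : ℕ)) := by
    ext k l
    simp only [Matrix.of_apply, Matrix.mul_apply, dividedDifference_eq_sum _ hx, eval_mul,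
      eval_pow, eval_X, φ]
    exact sum_congr rfl fun i _ => by ring
  rw [hprod, det_mul_eq_sum_powersetCard, Fintype.card_fin]
  refine sum_congr rfl fun I hI => ?_
  simp only [Matrix.of_apply]
  rw [det_of_sum_mul_pow_mul_pow_rev x φ (mem_powersetCard.1 hI).2, prod_div_distrib,
    div_mul_eq_mul_div]
  have hsplit : ∀ i ∈ I, ∏ j ∈ univ.erase i, (x i - x j) =
      (∏ j ∈ Iᶜ, (x i - x j)) * ∏ j ∈ I.erase i, (x i - x j) := by
    intro i hi
    rw [← prod_union (disjoint_compl_left.mono_right (erase_subset i I))]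
    congr 1
    ext j
    have : j ∉ I → j ≠ i := fun hj hji => hj (hji ▸ hi)
    simp only [mem_erase, mem_union, mem_compl, mem_univ]
    tauto
  have hne : ∏ i ∈ I, ∏ j ∈ I.erase i, (x i - x j) ≠ 0 :=
    prod_ne_zero_iff.2 fun i _ => prod_ne_zero_iff.2 fun j hj =>
      sub_ne_zero.2 (hx.ne (ne_of_mem_erase hj).symm)
  rw [prod_congr rfl hsplit, prod_mul_distrib, mul_div_mul_right _ _ hne]

open Filter Topology

theorem tendsto_sum_powersetCard_prod_eval_div [TopologicalSpace K] [IsTopologicalRing K]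
    [Nonempty ι] :
    Tendsto (fun x : ι → K => ∑ I ∈ powersetCard c (univ : Finset ι),
        (∏ i ∈ I, g.eval (x i)) / ∏ i ∈ I, ∏ j ∈ Iᶜ, (x i - x j))
      (𝓝[{x | Function.Injective x}] 0)
      (𝓝 (Matrix.of fun k l : Fin c =>
        (X ^ (k + l.rev : ℕ) * g).coeff (Fintype.card ι - 1)).det) := by
  have hcont : Continuous fun x : ι → K =>
      (Matrix.of fun k l : Fin c => dividedDifference (X ^ (k + l.rev : ℕ) * g) x).det :=
    Continuous.matrix_det <| continuous_matrix fun k l => continuous_dividedDifference _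
  have hlim := (hcont.tendsto 0).mono_left (nhdsWithin_le_nhds (s := {x | Function.Injective x}))
  simp only [dividedDifference_zero] at hlim
  refine hlim.congr' ?_
  filter_upwards [self_mem_nhdsWithin] with x hx
  exact (sum_powersetCard_prod_eval_div_eq_det c g hx).symm

end HankelDeterminant

section Limit

open Filter Topology

theorem det_coeff_X_pow_mul_one_add_X_pow {R : Type*} [CommRing R] (N b c : ℕ) :
    (Matrix.of fun k l : Fin c =>
        (X ^ (k + l.rev : ℕ) * (1 + X : R[X]) ^ N).coeff (b + c - 1)).det =
      (dualJacobiTrudiDet N fun _ : Fin c => (b : ℤ) : R) := by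
  rw [dualJacobiTrudiDet, Int.cast_det]
  congr 1
  ext k l
  have hrev : (l.rev : ℕ) = c - 1 - l := by rw [Fin.val_rev]; omega
  simp only [Matrix.of_apply, Matrix.map_apply, coeff_X_pow_mul', coeff_one_add_X_pow, intChoose]
  by_cases hk : (k : ℕ) ≤ b + l
  · rw [if_pos (by omega), if_pos (by omega), Int.cast_natCast]
    congr 2
    omega
  · rw [if_neg (by omega), if_neg (by omega), Int.cast_zero]

theorem tendsto_sum_powersetCard_prod_one_add_pow_div {K : Type*} [Field K] [TopologicalSpace K]
    [IsTopologicalRing K] (N b c : ℕ) :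
    Tendsto (fun t : Fin (b + c) → K => ∑ I ∈ powersetCard c univ,
        (∏ i ∈ I, (1 + t i) ^ N) / ∏ i ∈ I, ∏ j ∈ Iᶜ, (t i - t j))
      (𝓝[{t | Function.Injective t}] 0)
      (𝓝 (dualJacobiTrudiDet N fun _ : Fin c => (b : ℤ) : K)) := by
  rcases c.eq_zero_or_pos with rfl | hc
  · simpa [dualJacobiTrudiDet] using tendsto_const_nhds
  · have : Nonempty (Fin (b + c)) := ⟨0, by omega⟩
    have hlim := tendsto_sum_powersetCard_prod_eval_div (ι := Fin (b + c)) c ((1 + X : K[X]) ^ N)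
    simpa only [Fintype.card_fin, det_coeff_X_pow_mul_one_add_X_pow, eval_pow, eval_add, eval_one,
      eval_X] using hlim

end Limit

section Moebius

variable {K : Type*} [Field K] {α β γ : K}

/-- The Möbius transformation sending `α`, `β`, `γ` to `0`, `∞`, `-1`; at the pole `β` division
gives the junk value `0`. -/
def moebius (α β γ z : K) : K := (γ - β) * (z - α) / ((α - γ) * (z - β))

theorem moebius_self : moebius α β γ α = 0 := by simp [moebius]

theorem one_add_moebius (hαγ : α ≠ γ) {z : K} (hz : z ≠ β) :
    1 + moebius α β γ z = (α - β) / (α - γ) * (z - γ) / (z - β) := by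
  have := sub_ne_zero.2 hαγ
  have := sub_ne_zero.2 hz
  rw [moebius]
  field_simp
  ring

theorem moebius_sub_moebius (hαγ : α ≠ γ) {z w : K} (hz : z ≠ β) (hw : w ≠ β) :
    moebius α β γ z - moebius α β γ w =
      (γ - β) * ((α - β) / (α - γ)) * (z - w) / ((z - β) * (w - β)) := by
  have := sub_ne_zero.2 hαγ
  have := sub_ne_zero.2 hz
  have := sub_ne_zero.2 hw
  rw [moebius, moebius]
  field_simp
  ring

theorem injOn_moebius (hαβ : α ≠ β) (hαγ : α ≠ γ) (hβγ : β ≠ γ) :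
    Set.InjOn (moebius α β γ) {β}ᶜ := by
  intro z hz w hw hzw
  rw [← sub_eq_zero, moebius_sub_moebius hαγ hz hw] at hzw
  simpa [sub_eq_zero, hαβ, hαγ, hβγ.symm, Set.mem_compl_singleton_iff.1 hz,
    Set.mem_compl_singleton_iff.1 hw] using hzw

end Moebius

section Phi

variable {α β γ : ℂ}

theorem Phi_const_eq_sum_moebius (a b c : ℕ) (hαβ : α ≠ β) (hαγ : α ≠ γ) (hβγ : β ≠ γ)
    {x : Fin (b + c) → ℂ} (hx : ∀ i, x i ≠ β) :
    Phi a b c x (fun _ => β) (fun _ => γ) =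
      (γ - β) ^ (b * c) / ((α - β) / (α - γ)) ^ (c * a) * (∏ i, (x i - β)) ^ a *
        ∑ I ∈ powersetCard c univ, (∏ i ∈ I, (1 + moebius α β γ (x i)) ^ (a + b)) /
          ∏ i ∈ I, ∏ j ∈ Iᶜ, (moebius α β γ (x i) - moebius α β γ (x j)) := by
  have hγβ := sub_ne_zero.2 hβγ.symm
  have hκ := div_ne_zero (sub_ne_zero.2 hαβ) (sub_ne_zero.2 hαγ)
  rw [Phi, mul_sum]
  refine sum_congr rfl fun I hI => ?_
  have hIcard : #I = c := (mem_powersetCard.1 hI).2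
  have hIccard : #Iᶜ = b := by simp [card_compl, hIcard]
  have hne : ∀ J : Finset (Fin (b + c)), ∏ i ∈ J, (x i - β) ≠ 0 := fun J =>
    prod_ne_zero_iff.2 fun i _ => sub_ne_zero.2 (hx i)
  simp only [one_add_moebius hαγ (hx _), moebius_sub_moebius hαγ (hx _) (hx _), prod_const,
    prod_pow, prod_mul_distrib, prod_div_distrib, hIcard, hIccard, card_univ, Fintype.card_fin,
    ← prod_mul_prod_compl I fun i => x i - β]
  have hI' := hne I
  have hIc' := hne Iᶜ
  generalize (α - β) / (α - γ) = κ at *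
  generalize γ - β = δ at *
  generalize ∏ i ∈ I, (x i - γ) = w
  generalize ∏ i ∈ I, (x i - β) = u at *
  generalize ∏ i ∈ Iᶜ, (x i - β) = v at *
  generalize ∏ i ∈ I, ∏ j ∈ Iᶜ, (x i - x j) = D
  rcases eq_or_ne D 0 with rfl | hD
  · simp
  · simp only [div_pow, mul_pow]
    field_simp
    ring

open Filter Topology

theorem tendsto_Phi_const (a b c : ℕ) (hαβ : α ≠ β) (hαγ : α ≠ γ) (hβγ : β ≠ γ) :
    Tendsto (fun x => Phi a b c x (fun _ => β) (fun _ => γ))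
      (𝓝[{x | Function.Injective x}] fun _ => α)
      (𝓝 (NSSYT a b c * (α - β) ^ (a * b) * (γ - β) ^ (b * c) * (α - γ) ^ (c * a))) := by
  have hαβ' := sub_ne_zero.2 hαβ
  have hαγ' := sub_ne_zero.2 hαγ
  have hx : ∀ᶠ x in 𝓝[{x | Function.Injective x}] fun _ : Fin (b + c) => α, ∀ i, x i ≠ β :=
    eventually_all.2 fun i => nhdsWithin_le_nhds <|
      (continuous_apply i).continuousAt.eventually_ne hαβ
  have hmoebius : Tendsto (fun (x : Fin (b + c) → ℂ) i => moebius α β γ (x i))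
      (𝓝[{x | Function.Injective x}] fun _ => α) (𝓝[{t | Function.Injective t}] 0) := by
    refine tendsto_nhdsWithin_iff.2 ⟨?_, ?_⟩
    · have hcont : ContinuousAt (fun (x : Fin (b + c) → ℂ) i => moebius α β γ (x i))
          fun _ => α := by
        unfold moebius
        fun_prop (disch := simp [*])
      simpa only [ContinuousAt, moebius_self, ← Pi.zero_def] using
        hcont.mono_left nhdsWithin_le_nhds
    · filter_upwards [hx, self_mem_nhdsWithin] with x hx hinj i j hij
      exact hinj (injOn_moebius hαβ hαγ hβγ (hx i) (hx j) hij)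
  have hprod : Tendsto (fun x : Fin (b + c) → ℂ => (∏ i, (x i - β)) ^ a)
      (𝓝[{x | Function.Injective x}] fun _ => α) (𝓝 ((∏ _i : Fin (b + c), (α - β)) ^ a)) :=
    Tendsto.mono_left (Continuous.tendsto (by fun_prop) _) nhdsWithin_le_nhds
  have hsum := (tendsto_sum_powersetCard_prod_one_add_pow_div (a + b) b c).comp hmoebius
  have hlim := (hprod.const_mul ((γ - β) ^ (b * c) / ((α - β) / (α - γ)) ^ (c * a))).mul hsum
  rw [← NSSYT_eq_dualJacobiTrudiDet, prod_const, card_univ, Fintype.card_fin, div_pow,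
    Int.cast_natCast] at hlim
  convert hlim.congr' ?_ using 2
  · field_simp
    ring
  · filter_upwards [hx] with x hx
    simp only [Phi_const_eq_sum_moebius a b c hαβ hαγ hβγ hx, div_pow, Function.comp_apply]

theorem const_mem_closure_setOf_injective {𝕜 : Type*} [NontriviallyNormedField 𝕜] [CharZero 𝕜]
    {n : ℕ} (α : 𝕜) : (fun _ => α) ∈ closure {x : Fin n → 𝕜 | Function.Injective x} := by
  have hlim : Tendsto (fun (ε : 𝕜) (i : Fin n) => α + ε * (i : ℕ)) (𝓝[≠] 0) (𝓝 fun _ => α) := by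
    have hcont : Continuous fun (ε : 𝕜) (i : Fin n) => α + ε * (i : ℕ) := by fun_prop
    simpa using (hcont.tendsto 0).mono_left nhdsWithin_le_nhds
  refine mem_closure_of_tendsto hlim ?_
  filter_upwards [self_mem_nhdsWithin] with ε hε i j hij
  exact Fin.ext (Nat.cast_injective (mul_left_cancel₀ hε (add_left_cancel hij)))

theorem Phi_fully_homogeneous_of_pairwise_ne (a b c : ℕ)
    {P : (Fin (b + c) → ℂ) → ℂ} (hP : Continuous P)
    (hagree : ∀ x, Function.Injective x → P x = Phi a b c x (fun _ => β) (fun _ => γ))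
    (hαβ : α ≠ β) (hαγ : α ≠ γ) (hβγ : β ≠ γ) :
    P (fun _ => α) =
      NSSYT a b c * (α - β) ^ (a * b) * (γ - β) ^ (b * c) * (α - γ) ^ (c * a) := by
  have : (𝓝[{x : Fin (b + c) → ℂ | Function.Injective x}] fun _ => α).NeBot :=
    mem_closure_iff_nhdsWithin_neBot.1 (const_mem_closure_setOf_injective α)
  refine tendsto_nhds_unique ((hP.tendsto _).mono_left nhdsWithin_le_nhds)
    ((tendsto_Phi_const a b c hαβ hαγ hβγ).congr' ?_)
  filter_upwards [self_mem_nhdsWithin] with x hx using (hagree x hx).symm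

theorem Phi_fully_homogeneous_general (a b c : ℕ)
    (P : (Fin (b + c) → ℂ) → (Fin (a + c) → ℂ) → (Fin (a + b) → ℂ) → ℂ)
    (hP : Continuous fun x : (Fin (b + c) → ℂ) × (Fin (a + c) → ℂ) × (Fin (a + b) → ℂ) =>
      P x.1 x.2.1 x.2.2)
    (hagree : ∀ α β γ, Function.Injective α → P α β γ = Phi a b c α β γ)
    (α β γ : ℂ) :
    P (fun _ => α) (fun _ => β) (fun _ => γ) =
      (NSSYT a b c : ℂ) * (α - β) ^ (a * b) * (γ - β) ^ (b * c) * (α - γ) ^ (c * a) := by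
  have hext_β : ∀ γ, α ≠ γ → (fun β : ℂ => P (fun _ => α) (fun _ => β) (fun _ => γ)) = fun β =>
      (NSSYT a b c : ℂ) * (α - β) ^ (a * b) * (γ - β) ^ (b * c) * (α - γ) ^ (c * a) := by
    intro γ hαγ
    refine Continuous.ext_on ((Set.toFinite {α, γ}).countable.dense_compl ℂ) (by fun_prop)
      (by fun_prop) fun β hβ => ?_
    simp only [Set.mem_compl_iff, Set.mem_insert_iff, Set.mem_singleton_iff, not_or] at hβ
    exact Phi_fully_homogeneous_of_pairwise_ne a b c (by fun_prop) (fun x => hagree x _ _)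
      (Ne.symm hβ.1) hαγ hβ.2
  have hext_γ : (fun γ : ℂ => P (fun _ => α) (fun _ => β) (fun _ => γ)) = fun γ =>
      (NSSYT a b c : ℂ) * (α - β) ^ (a * b) * (γ - β) ^ (b * c) * (α - γ) ^ (c * a) :=
    Continuous.ext_on (dense_compl_singleton α) (by fun_prop) (by fun_prop) fun γ hγ =>
      congrFun (hext_β γ (Ne.symm hγ)) β
  exact congrFun hext_γ γ

theorem IsPolyFun.continuous {a b c : ℕ}
    {P : (Fin (b + c) → ℂ) → (Fin (a + c) → ℂ) → (Fin (a + b) → ℂ) → ℂ}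
    (hP : IsPolyFun a b c P) :
    Continuous fun x : (Fin (b + c) → ℂ) × (Fin (a + c) → ℂ) × (Fin (a + b) → ℂ) =>
      P x.1 x.2.1 x.2.2 := by
  obtain ⟨p, hp⟩ := hP
  simp only [hp]
  refine (MvPolynomial.continuous_eval p).comp (continuous_pi ?_)
  rintro (i | i | i) <;> simp only [Sum.elim_inl, Sum.elim_inr] <;> fun_prop

end Phi

/-- With all three families of spectral parameters constant, any polynomial extension `P`
of `Φ_{a,b,c}` factorizes as `N_{a,b,c} · (α-β)^{ab} · (γ-β)^{bc} · (α-γ)^{ca}`. -/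
theorem Phi_fully_homogeneous (a b c : ℕ)
    (P : (Fin (b + c) → ℂ) → (Fin (a + c) → ℂ) → (Fin (a + b) → ℂ) → ℂ)
    (hP : IsPolyFun a b c P)
    (hagree : ∀ α β γ, Function.Injective α → P α β γ = Phi a b c α β γ)
    (α β γ : ℂ) :
    P (fun _ => α) (fun _ => β) (fun _ => γ) =
      (NSSYT a b c : ℂ) * (α - β) ^ (a * b) * (γ - β) ^ (b * c) * (α - γ) ^ (c * a) :=
  Phi_fully_homogeneous_general a b c P hP.continuous hagree α β γ
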